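/- arXiv:2204.06686 — 2 statements merged into one kernel-verified Lean document; each statement's English description precedes it below -/
import Mathlib

section
/- There exists an absolute constant c > 0 such that for every d ≥ 1, every n ∈ ℕ and every function f : {0,1}^n → {0,1}, E_x[‖∇f(x)‖₂] ≥ c·√d·W_{≈d}[f]. -/
open Finset

noncomputable section

/-- Expectation over the uniform distribution on `{0,1}^n`. -/
def hcExp (n : ℕ) (g : (Fin n → Bool) → ℝ) : ℝ :=
  (∑ x : Fin n → Bool, g x) / 2 ^ n

/-- Flip the `i`-th coordinate of `x`. -/
def hcFlip {n : ℕ} (x : Fin n → Bool) (i : Fin n) : Fin n → Bool :=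
  Function.update x i (!(x i))

/-- Sensitivity of `f` at `x`. -/
def sens {n : ℕ} (f : (Fin n → Bool) → Bool) (x : Fin n → Bool) : ℕ :=
  (Finset.univ.filter fun i => f (hcFlip x i) ≠ f x).card

/-- `f` with values in `{0,1} ⊆ ℝ`. -/
def toReal {n : ℕ} (f : (Fin n → Bool) → Bool) : (Fin n → Bool) → ℝ :=
  fun x => if f x then 1 else 0

/-- Variance of a Boolean function. -/
def hcVar (n : ℕ) (f : (Fin n → Bool) → Bool) : ℝ :=
  hcExp n (toReal f) - (hcExp n (toReal f)) ^ 2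

/-- Influence of coordinate `i`. -/
def influence (n : ℕ) (f : (Fin n → Bool) → Bool) (i : Fin n) : ℝ :=
  hcExp n (fun x => if f (hcFlip x i) = f x then 0 else 1)

/-- Fourier character. -/
def chi {n : ℕ} (S : Finset (Fin n)) (x : Fin n → Bool) : ℝ :=
  ∏ i ∈ S, (if x i then (-1 : ℝ) else 1)

/-- Fourier coefficient of `g` at `S`. -/
def fcoef (n : ℕ) (g : (Fin n → Bool) → ℝ) (S : Finset (Fin n)) : ℝ :=
  hcExp n (fun x => g x * chi S x)

/-- Derivative of `g` along coordinate `i`. -/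
def derivOn {n : ℕ} (g : (Fin n → Bool) → ℝ) (i : Fin n) (x : Fin n → Bool) : ℝ :=
  g (Function.update x i false) - g (Function.update x i true)

/-- Euclidean norm of the gradient of `g` at `x`. -/
def gradNorm2 {n : ℕ} (g : (Fin n → Bool) → ℝ) (x : Fin n → Bool) : ℝ :=
  Real.sqrt (∑ i, (derivOn g i x) ^ 2)

/-- `ℓ_p` norm of the gradient of `g` at `x`. -/
def gradNormP {n : ℕ} (p : ℝ) (g : (Fin n → Bool) → ℝ) (x : Fin n → Bool) : ℝ :=
  (∑ i, |derivOn g i x| ^ p) ^ (1 / p)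

/-- Fourier weight at exactly level `d`. -/
def wEq (n : ℕ) (g : (Fin n → Bool) → ℝ) (d : ℕ) : ℝ :=
  ∑ S ∈ Finset.univ.filter (fun S : Finset (Fin n) => S.card = d), (fcoef n g S) ^ 2

/-- Approximate level-`d` Fourier weight: levels in `[d, 2d)`. -/
def wApprox (n : ℕ) (g : (Fin n → Bool) → ℝ) (d : ℕ) : ℝ :=
  ∑ S ∈ Finset.univ.filter (fun S : Finset (Fin n) => d ≤ S.card ∧ S.card < 2 * d),
    (fcoef n g S) ^ 2

/-- Fourier weight at levels `≥ d`. -/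
def wGe (n : ℕ) (g : (Fin n → Bool) → ℝ) (d : ℕ) : ℝ :=
  ∑ S ∈ Finset.univ.filter (fun S : Finset (Fin n) => d ≤ S.card), (fcoef n g S) ^ 2


lemma chi_univ {n : ℕ} (S : Finset (Fin n)) (x : Fin n → Bool) :
    chi S x = ∏ i, (if i ∈ S then (if x i then (-1 : ℝ) else 1) else 1) := by
  simp [chi, Finset.prod_ite_mem]

lemma chi_orth {n : ℕ} (S T : Finset (Fin n)) :
    ∑ x : Fin n → Bool, chi S x * chi T x = if S = T then (2 : ℝ) ^ n else 0 := by
  have h : ∀ x : Fin n → Bool, chi S x * chi T x =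
      ∏ i, ((if i ∈ S then (if x i then (-1 : ℝ) else 1) else 1) *
        (if i ∈ T then (if x i then (-1 : ℝ) else 1) else 1)) := by
    intro x
    rw [chi_univ, chi_univ, Finset.prod_mul_distrib]
  simp_rw [h]
  rw [← Fintype.prod_sum (fun (i : Fin n) (b : Bool) =>
    ((if i ∈ S then (if b then (-1 : ℝ) else 1) else 1) *
        (if i ∈ T then (if b then (-1 : ℝ) else 1) else 1)))]
  split_ifs with hST
  · subst hST
    have : ∀ i : Fin n, ∑ b : Bool, ((if i ∈ S then (if b then (-1 : ℝ) else 1) else 1) *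
        (if i ∈ S then (if b then (-1 : ℝ) else 1) else 1)) = 2 := by
      intro i
      by_cases hi : i ∈ S <;> simp [hi] <;> norm_num
    simp_rw [this]
    simp
  · have : ∃ i, ¬ (i ∈ S ↔ i ∈ T) := by
      by_contra hc
      push Not at hc
      exact hST (Finset.ext hc)
    obtain ⟨i, hi⟩ := this
    apply Finset.prod_eq_zero (Finset.mem_univ i)
    by_cases h1 : i ∈ S <;> by_cases h2 : i ∈ T <;> simp_all

lemma chi_dual {n : ℕ} (x y : Fin n → Bool) :
    ∑ S : Finset (Fin n), chi S x * chi S y = if x = y then (2 : ℝ) ^ n else 0 := by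
  have h : ∑ S : Finset (Fin n), chi S x * chi S y =
      ∏ i, (1 + (if x i then (-1 : ℝ) else 1) * (if y i then (-1 : ℝ) else 1)) := by
    rw [Finset.prod_one_add, Finset.powerset_univ]
    apply Finset.sum_congr rfl
    intro S _
    rw [chi, chi, Finset.prod_mul_distrib]
  rw [h]
  split_ifs with hxy
  · subst hxy
    have : ∀ i : Fin n, (1 + (if x i then (-1 : ℝ) else 1) * (if x i then (-1 : ℝ) else 1)) = 2 := by
      intro i
      by_cases hi : x i <;> simp [hi] <;> norm_num
    simp_rw [this]
    simp
  · obtain ⟨i, hi⟩ := Function.ne_iff.mp hxy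
    apply Finset.prod_eq_zero (Finset.mem_univ i)
    cases h1 : x i <;> cases h2 : y i <;> simp_all

lemma inversion {n : ℕ} (g : (Fin n → Bool) → ℝ) (x : Fin n → Bool) :
    g x = ∑ S, fcoef n g S * chi S x := by
  simp only [fcoef, hcExp, div_mul_eq_mul_div, Finset.sum_mul]
  rw [← Finset.sum_div, Finset.sum_comm]
  simp_rw [mul_assoc, ← Finset.mul_sum, chi_dual]
  simp

lemma parseval {n : ℕ} (g : (Fin n → Bool) → ℝ) :
    ∑ S, fcoef n g S ^ 2 = hcExp n (fun x => g x ^ 2) := by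
  have h : ∀ x, g x ^ 2 = ∑ S, fcoef n g S * (g x * chi S x) := by
    intro x
    conv_lhs => rw [sq]; arg 2; rw [inversion g x]
    rw [Finset.mul_sum]
    exact Finset.sum_congr rfl fun _ _ => by ring
  simp only [hcExp, h]
  rw [Finset.sum_comm, Finset.sum_div]
  apply Finset.sum_congr rfl
  intro S _
  rw [← Finset.mul_sum, mul_div_assoc, sq]
  rfl

/-- Level-one coefficients of the restricted function. -/
def resA {n : ℕ} (g : (Fin n → Bool) → ℝ) (J : Finset (Fin n)) (i : Fin n)
    (x : Fin n → Bool) : ℝ :=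
  ∑ S with S ∩ J = {i}, fcoef n g S * chi (S.erase i) x

lemma chi_update {n : ℕ} (S : Finset (Fin n)) (i : Fin n) (hi : i ∉ S) (x : Fin n → Bool)
    (b : Bool) : chi S (Function.update x i b) = chi S x := by
  unfold chi
  apply Finset.prod_congr rfl
  intro j hj
  have : j ≠ i := fun h => hi (h ▸ hj)
  simp [this]

lemma resA_update {n : ℕ} (g : (Fin n → Bool) → ℝ) (J : Finset (Fin n)) (i : Fin n)
    (x : Fin n → Bool) (b : Bool) : resA g J i (Function.update x i b) = resA g J i x := by
  unfold resA
  apply Finset.sum_congr rfl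
  intro S _
  rw [chi_update _ _ (by simp)]

lemma resA_sum {n : ℕ} (g : (Fin n → Bool) → ℝ) (J : Finset (Fin n)) (i : Fin n) :
    hcExp n (fun x => g x * chi {i} x * resA g J i x) =
      ∑ S with S ∩ J = {i}, fcoef n g S ^ 2 := by
  simp only [hcExp, resA, Finset.mul_sum]
  rw [Finset.sum_comm, Finset.sum_div]
  apply Finset.sum_congr rfl
  intro S hS
  have hi : i ∈ S := by
    have : i ∈ S ∩ J := by rw [(Finset.mem_filter.mp hS).2]; simp
    exact (Finset.mem_inter.mp this).1
  have : ∀ x : Fin n → Bool, g x * chi {i} x * (fcoef n g S * chi (S.erase i) x) =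
      fcoef n g S * (g x * chi S x) := by
    intro x
    have : chi S x = chi {i} x * chi (S.erase i) x := by
      unfold chi
      rw [Finset.prod_singleton, Finset.mul_prod_erase S (fun i => if x i then (-1 : ℝ) else 1) hi]
    rw [this]; ring
  simp_rw [this]
  rw [← Finset.mul_sum, mul_div_assoc, sq]
  rfl

lemma sum_flip {n : ℕ} (i : Fin n) (G : (Fin n → Bool) → ℝ) :
    ∑ x, G (hcFlip x i) = ∑ x, G x := by
  have hinv : Function.Involutive (fun x : Fin n → Bool => hcFlip x i) := by
    intro x
    simp [hcFlip]
  exact Equiv.sum_comp hinv.toPerm G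

lemma resA_deriv {n : ℕ} (g : (Fin n → Bool) → ℝ) (J : Finset (Fin n)) (i : Fin n) :
    hcExp n (fun x => derivOn g i x * resA g J i x) =
      2 * ∑ S with S ∩ J = {i}, fcoef n g S ^ 2 := by
  rw [← resA_sum]
  unfold hcExp
  rw [← mul_div_assoc, two_mul]
  congr 1
  conv_rhs => arg 2; rw [← sum_flip i]
  rw [← Finset.sum_add_distrib]
  apply Finset.sum_congr rfl
  intro x _
  have e : Function.update x i (x i) = x := Function.update_eq_self i x
  cases hx : x i
  · rw [hx] at e
    simp [derivOn, hcFlip, hx, resA_update, chi, e]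
    ring
  · rw [hx] at e
    simp [derivOn, hcFlip, hx, resA_update, chi, e]
    ring

/-- Merge: `y` on `J`, `x` off `J`. -/
def hcMerge {n : ℕ} (J : Finset (Fin n)) (x y : Fin n → Bool) : Fin n → Bool :=
  fun i => if i ∈ J then y i else x i

lemma chi_merge {n : ℕ} (S J : Finset (Fin n)) (x y : Fin n → Bool) :
    chi S (hcMerge J x y) = chi (S \ J) x * chi (S ∩ J) y := by
  unfold chi
  rw [← Finset.prod_sdiff (Finset.inter_subset_left : S ∩ J ⊆ S), Finset.sdiff_inter_self_left]
  congr 1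
  · apply Finset.prod_congr rfl
    intro j hj
    simp [hcMerge, (Finset.mem_sdiff.mp hj).2]
  · apply Finset.prod_congr rfl
    intro j hj
    simp [hcMerge, (Finset.mem_inter.mp hj).2]

lemma resA_eq {n : ℕ} (g : (Fin n → Bool) → ℝ) (J : Finset (Fin n)) (i : Fin n)
    (x : Fin n → Bool) :
    resA g J i x = fcoef n (fun y => g (hcMerge J x y)) {i} := by
  unfold fcoef hcExp
  have h : ∀ y, g (hcMerge J x y) * chi {i} y =
      ∑ S, fcoef n g S * chi (S \ J) x * (chi (S ∩ J) y * chi {i} y) := by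
    intro y
    rw [inversion g (hcMerge J x y), Finset.sum_mul]
    apply Finset.sum_congr rfl
    intro S _
    rw [chi_merge]; ring
  simp_rw [h]
  rw [Finset.sum_comm]
  simp_rw [← Finset.mul_sum, chi_orth]
  rw [Finset.sum_div, resA, Finset.sum_filter]
  apply Finset.sum_congr rfl
  intro S _
  split_ifs with hS
  · rw [← Finset.sdiff_inter_self_left, hS, Finset.sdiff_singleton_eq_erase]
    field_simp
  · simp

lemma resA_bound {n : ℕ} (f : (Fin n → Bool) → Bool) (J : Finset (Fin n))
    (x : Fin n → Bool) : ∑ i ∈ J, resA (toReal f) J i x ^ 2 ≤ 1 := by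
  simp_rw [resA_eq]
  set F : (Fin n → Bool) → ℝ := fun y => toReal f (hcMerge J x y) with hF
  calc ∑ i ∈ J, fcoef n F {i} ^ 2 = ∑ S ∈ J.image (fun i => ({i} : Finset (Fin n))),
        fcoef n F S ^ 2 := by
        rw [Finset.sum_image]
        intro a _ b _ h
        simpa using h
    _ ≤ ∑ S, fcoef n F S ^ 2 :=
        Finset.sum_le_sum_of_subset_of_nonneg (Finset.subset_univ _) fun _ _ _ => sq_nonneg _
    _ = hcExp n (fun x => F x ^ 2) := parseval F
    _ ≤ 1 := by
        unfold hcExp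
        rw [div_le_one (by positivity)]
        calc ∑ y, F y ^ 2 ≤ ∑ y : Fin n → Bool, (1 : ℝ) := by
              apply Finset.sum_le_sum
              intro y _
              simp only [hF, toReal]
              split_ifs <;> norm_num
          _ = 2 ^ n := by simp

lemma key_J {n : ℕ} (f : (Fin n → Bool) → Bool) (J : Finset (Fin n)) :
    2 * ∑ i ∈ J, ∑ S with S ∩ J = {i}, fcoef n (toReal f) S ^ 2 ≤
      hcExp n (fun x => √(∑ i ∈ J, derivOn (toReal f) i x ^ 2)) := by
  rw [Finset.mul_sum]
  simp_rw [← resA_deriv]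
  unfold hcExp
  rw [← Finset.sum_div, Finset.sum_comm]
  gcongr with x
  refine (Real.sum_mul_le_sqrt_mul_sqrt _ _ _).trans ?_
  apply mul_le_of_le_one_right (Real.sqrt_nonneg _)
  rw [Real.sqrt_le_left zero_le_one, one_pow]
  exact resA_bound f J x

/-- Weight of the random subset. -/
def wJ {n : ℕ} (p : ℝ) (J : Finset (Fin n)) : ℝ := (∏ _i ∈ J, p) * ∏ _i ∈ Jᶜ, (1 - p)

lemma wJ_sum {n : ℕ} (p : ℝ) : ∑ J : Finset (Fin n), wJ p J = 1 := by
  unfold wJ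
  rw [← Fintype.prod_add]
  simp

lemma wJ_inter {n : ℕ} (p : ℝ) (S : Finset (Fin n)) (i : Fin n) (hi : i ∈ S) :
    ∑ J with S ∩ J = {i}, wJ p J = p * (1 - p) ^ (S.card - 1) := by
  have h := Fintype.prod_add (fun j : Fin n => if j ∈ S ∧ j ≠ i then 0 else p)
    (fun j => if j = i then 0 else 1 - p)
  have h2 : ∏ j : Fin n, ((if j ∈ S ∧ j ≠ i then 0 else p) + (if j = i then 0 else 1 - p)) =
      p * (1 - p) ^ (S.card - 1) := by
    have : ∀ j : Fin n, ((if j ∈ S ∧ j ≠ i then 0 else p) + (if j = i then 0 else 1 - p)) =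
        if j ∈ S then (if j = i then p else 1 - p) else 1 := by
      intro j
      by_cases h1 : j ∈ S <;> by_cases h2 : j = i <;> simp_all
    simp_rw [this]
    rw [Finset.prod_ite_mem, Finset.univ_inter, ← Finset.mul_prod_erase S _ hi,
      ← Finset.card_erase_of_mem hi]
    simp only [if_true]
    congr 1
    rw [← Finset.prod_const]
    apply Finset.prod_congr rfl
    intro j hj
    simp [(Finset.mem_erase.mp hj).1]
  rw [← h2, h, Finset.sum_filter]
  apply Finset.sum_congr rfl
  intro J _
  split_ifs with hJ
  · have hm : ∀ j, (j ∈ S ∧ j ∈ J) ↔ j = i := by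
      intro j
      have := Finset.ext_iff.mp hJ j
      simpa using this
    unfold wJ
    congr 1
    · apply Finset.prod_congr rfl
      intro j hj
      rw [if_neg]
      rintro ⟨h1, h2⟩
      exact h2 ((hm j).mp ⟨h1, hj⟩)
    · apply Finset.prod_congr rfl
      intro j hj
      rw [if_neg]
      intro h1
      exact (Finset.mem_compl.mp hj) ((hm j).mpr h1).2
  · symm
    by_cases hiJ : i ∈ J
    · have : ∃ j, j ∈ S ∧ j ∈ J ∧ j ≠ i := by
        by_contra hc
        push Not at hc
        apply hJ
        ext j
        simp only [Finset.mem_inter, Finset.mem_singleton]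
        constructor
        · rintro ⟨h1, h2⟩
          exact hc j h1 h2
        · rintro rfl
          exact ⟨hi, hiJ⟩
      obtain ⟨j, h1, h2, h3⟩ := this
      rw [Finset.prod_eq_zero h2 (by simp [h1, h3]), zero_mul]
    · rw [mul_comm, Finset.prod_eq_zero (Finset.mem_compl.mpr hiJ) (by simp), zero_mul]

lemma wJ_nonneg {n : ℕ} {p : ℝ} (h0 : 0 ≤ p) (h1 : p ≤ 1) (J : Finset (Fin n)) : 0 ≤ wJ p J := by
  have : 0 ≤ 1 - p := by linarith
  unfold wJ
  exact mul_nonneg (Finset.prod_nonneg fun _ _ => h0) (Finset.prod_nonneg fun _ _ => this)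

lemma avg_sqrt {n : ℕ} {p : ℝ} (h0 : 0 ≤ p) (h1 : p ≤ 1) (v : Fin n → ℝ) :
    ∑ J, wJ p J * √(∑ i ∈ J, v i ^ 2) ≤ √p * √(∑ i, v i ^ 2) := by
  have hp : ∑ J, wJ p J * (∑ i ∈ J, v i ^ 2) = p * ∑ i, v i ^ 2 := by
    have h : ∀ J : Finset (Fin n), wJ p J * (∑ i ∈ J, v i ^ 2) =
        ∑ i, v i ^ 2 * (if {i} ∩ J = {i} then wJ p J else 0) := by
      intro J
      rw [Finset.mul_sum]
      simp only [mul_ite, mul_zero]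
      rw [← Finset.sum_filter]
      apply Finset.sum_congr
      · ext i; simp
      · intro i _; ring
    simp_rw [h]
    rw [Finset.sum_comm, Finset.mul_sum]
    apply Finset.sum_congr rfl
    intro i _
    rw [← Finset.mul_sum, ← Finset.sum_filter, wJ_inter p {i} i (by simp)]
    simp
    ring
  rw [← Real.sqrt_mul h0, ← hp]
  calc ∑ J, wJ p J * √(∑ i ∈ J, v i ^ 2)
      = ∑ J, √(wJ p J) * √(wJ p J * ∑ i ∈ J, v i ^ 2) := by
        apply Finset.sum_congr rfl
        intro J _
        rw [Real.sqrt_mul (wJ_nonneg h0 h1 J), ← mul_assoc, Real.mul_self_sqrt (wJ_nonneg h0 h1 J)]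
    _ ≤ √(∑ J, wJ p J) * √(∑ J, wJ p J * ∑ i ∈ J, v i ^ 2) :=
        Real.sum_sqrt_mul_sqrt_le _ (fun J => wJ_nonneg h0 h1 J)
          (fun J => mul_nonneg (wJ_nonneg h0 h1 J) (Finset.sum_nonneg fun _ _ => sq_nonneg _))
    _ = _ := by rw [wJ_sum]; simp

lemma avg_key {n : ℕ} {p : ℝ} (h0 : 0 ≤ p) (h1 : p ≤ 1) (f : (Fin n → Bool) → Bool) :
    2 * ∑ S : Finset (Fin n), (S.card * (p * (1 - p) ^ (S.card - 1))) * fcoef n (toReal f) S ^ 2 ≤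
      √p * hcExp n (fun x => gradNorm2 (toReal f) x) := by
  have hL : ∑ J : Finset (Fin n), wJ p J *
      (2 * ∑ i ∈ J, ∑ S with S ∩ J = {i}, fcoef n (toReal f) S ^ 2) =
      2 * ∑ S : Finset (Fin n), (S.card * (p * (1 - p) ^ (S.card - 1))) *
        fcoef n (toReal f) S ^ 2 := by
    have h : ∀ J : Finset (Fin n), wJ p J *
      (2 * ∑ i ∈ J, ∑ S with S ∩ J = {i}, fcoef n (toReal f) S ^ 2) =
      2 * ∑ S : Finset (Fin n), ∑ i ∈ S, (if S ∩ J = {i} then wJ p J else 0) *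
        fcoef n (toReal f) S ^ 2 := by
      intro J
      rw [mul_left_comm]
      congr 1
      simp_rw [Finset.sum_filter]
      rw [Finset.sum_comm, Finset.mul_sum]
      apply Finset.sum_congr rfl
      intro S _
      rw [Finset.mul_sum]
      have e1 : ∀ T : Finset (Fin n), S ∩ J ⊆ T → ∑ i ∈ T, (if S ∩ J = {i} then wJ p J else 0) *
        fcoef n (toReal f) S ^ 2 = ∑ i, (if S ∩ J = {i} then wJ p J else 0) *
        fcoef n (toReal f) S ^ 2 := by
        intro T hT
        apply Finset.sum_subset (Finset.subset_univ _)
        intro i _ hi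
        rw [if_neg, zero_mul]
        intro h
        apply hi
        apply hT
        rw [h]
        simp
      rw [e1 S Finset.inter_subset_left, ← e1 J Finset.inter_subset_right]
      apply Finset.sum_congr rfl
      intro i _
      split_ifs <;> simp
    simp_rw [h]
    rw [← Finset.mul_sum, Finset.sum_comm]
    congr 1
    apply Finset.sum_congr rfl
    intro S _
    rw [Finset.sum_comm]
    simp_rw [← Finset.sum_mul, ← Finset.sum_filter]
    rw [Finset.sum_congr rfl (fun i hi => wJ_inter p S i hi)]
    simp
  rw [← hL]
  calc _ ≤ ∑ J : Finset (Fin n), wJ p J *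
        hcExp n (fun x => √(∑ i ∈ J, derivOn (toReal f) i x ^ 2)) := by
        apply Finset.sum_le_sum
        intro J _
        exact mul_le_mul_of_nonneg_left (key_J f J) (wJ_nonneg h0 h1 J)
    _ ≤ _ := by
        unfold hcExp
        simp_rw [← mul_div_assoc]
        rw [← Finset.sum_div]
        simp_rw [Finset.mul_sum]
        rw [Finset.sum_comm]
        gcongr with x
        exact avg_sqrt h0 h1 _

theorem grad_lower_bound_approx_level_d :
    ∃ c : ℝ, 0 < c ∧ ∀ (d : ℕ), 1 ≤ d → ∀ (n : ℕ) (f : (Fin n → Bool) → Bool),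
      hcExp n (fun x => gradNorm2 (toReal f) x) ≥
        c * Real.sqrt d * wApprox n (toReal f) d := by
  refine ⟨1 / 2, by norm_num, ?_⟩
  intro d hd n f
  have hd' : (1 : ℝ) ≤ d := by exact_mod_cast hd
  have hd0 : (0 : ℝ) < d := by linarith
  set p : ℝ := 1 / (4 * d) with hp
  have hpd : p * d = 1 / 4 := by rw [hp]; field_simp
  have h0 : 0 ≤ p := by positivity
  have h1 : p ≤ 1 := by nlinarith
  have key := avg_key h0 h1 f
  have hW : 1 / 8 * wApprox n (toReal f) d ≤ ∑ S : Finset (Fin n),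
      (S.card * (p * (1 - p) ^ (S.card - 1))) * fcoef n (toReal f) S ^ 2 := by
    unfold wApprox
    rw [Finset.mul_sum]
    have hq : 0 ≤ 1 - p := by linarith
    refine (Finset.sum_le_sum ?_).trans
      (Finset.sum_le_sum_of_subset_of_nonneg (Finset.filter_subset _ _) fun S _ _ => by positivity)
    intro S hS
    obtain ⟨hS1, hS2⟩ := (Finset.mem_filter.mp hS).2
    apply mul_le_mul_of_nonneg_right _ (sq_nonneg _)
    have hb : 1 / 2 ≤ (1 - p) ^ (S.card - 1) := by
      have := one_add_mul_le_pow (a := -p) (by linarith) (S.card - 1)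
      rw [← sub_eq_add_neg 1 p] at this
      refine le_trans ?_ this
      have h3 : ((S.card - 1 : ℕ) : ℝ) ≤ 2 * d := by
        have : S.card - 1 ≤ 2 * d := by omega
        exact_mod_cast this
      nlinarith
    have hk : 1 / 4 ≤ S.card * p := by
      have : (d : ℝ) ≤ S.card := by exact_mod_cast hS1
      nlinarith
    rw [← mul_assoc]
    nlinarith
  have hs : √p * √d = 1 / 2 := by
    rw [← Real.sqrt_mul h0, hpd]
    rw [show (1 / 4 : ℝ) = (1 / 2) ^ 2 by norm_num]
    exact Real.sqrt_sq (by norm_num)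
  have hsd : 0 ≤ √(d : ℝ) := Real.sqrt_nonneg _
  have := mul_le_mul_of_nonneg_left (show 1 / 4 * wApprox n (toReal f) d ≤
    √p * hcExp n (fun x => gradNorm2 (toReal f) x) by linarith) hsd
  have e : √(d : ℝ) * (√p * hcExp n (fun x => gradNorm2 (toReal f) x)) =
      1 / 2 * hcExp n (fun x => gradNorm2 (toReal f) x) := by rw [← hs]; ring
  rw [e] at this
  linarith

end
end

section
/- Let f : {0,1}^n → {0,1} and let col be any 2-coloring of the edges of the hypercube {0,1}^n with colors red and blue (i.e., a symmetric assignment of a color to each pair {x, x ⊕ e_i}). Then E_x[‖∇_red f(x)‖₂ + ‖∇_blue f(x)‖₂] ≥ (1/2)·√(W_{=1}[f]). -/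
open Finset

noncomputable section

/-- Number of red sensitive edges at `x` counted when `f x = 1` (red sensitivity).
Here a coloring `col : (Fin n → Bool) → Fin n → Bool` gives the color (`true` = red,
`false` = blue) of the edge `(x, x ⊕ eᵢ)`. -/
def sRed {n : ℕ} (f : (Fin n → Bool) → Bool) (col : (Fin n → Bool) → Fin n → Bool)
    (x : Fin n → Bool) : ℕ :=
  if f x then
    (Finset.univ.filter fun i => f (hcFlip x i) ≠ f x ∧ col x i = true).card
  else 0

/-- Blue sensitivity: counted when `f x = 0`. -/
def sBlue {n : ℕ} (f : (Fin n → Bool) → Bool) (col : (Fin n → Bool) → Fin n → Bool)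
    (x : Fin n → Bool) : ℕ :=
  if f x then 0
  else (Finset.univ.filter fun i => f (hcFlip x i) ≠ f x ∧ col x i = false).card

/-- The Talagrand boundary with respect to the coloring `col`. -/
def talagrandCol {n : ℕ} (f : (Fin n → Bool) → Bool)
    (col : (Fin n → Bool) → Fin n → Bool) : ℝ :=
  hcExp n (fun x => Real.sqrt (sRed f col x)) + hcExp n (fun x => Real.sqrt (sBlue f col x))

/-- The coloring is symmetric: the two endpoints of an edge see the same color. -/
def colSymm {n : ℕ} (col : (Fin n → Bool) → Fin n → Bool) : Prop :=
  ∀ (x : Fin n → Bool) (i : Fin n), col (hcFlip x i) i = col x i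

/-- The red gradient: `i`-th coordinate is `1` iff `f x = 1` and `(x, x ⊕ eᵢ)` is a
red sensitive edge. -/
def redGradNorm {n : ℕ} (f : (Fin n → Bool) → Bool)
    (col : (Fin n → Bool) → Fin n → Bool) (x : Fin n → Bool) : ℝ :=
  Real.sqrt (∑ i,
    (if f x = true ∧ f (hcFlip x i) ≠ f x ∧ col x i = true then (1 : ℝ) else 0) ^ 2)

/-- The blue gradient: `i`-th coordinate is `1` iff `f x = 0` and `(x, x ⊕ eᵢ)` is a
blue sensitive edge. -/
def blueGradNorm {n : ℕ} (f : (Fin n → Bool) → Bool)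
    (col : (Fin n → Bool) → Fin n → Bool) (x : Fin n → Bool) : ℝ :=
  Real.sqrt (∑ i,
    (if f x = false ∧ f (hcFlip x i) ≠ f x ∧ col x i = false then (1 : ℝ) else 0) ^ 2)

lemma rl_flip_flip {n : ℕ} (x : Fin n → Bool) (i : Fin n) : hcFlip (hcFlip x i) i = x := by
  unfold hcFlip
  simp

lemma rl_flip_ne {n : ℕ} (x : Fin n → Bool) (i : Fin n) : hcFlip x i ≠ x := by
  intro h
  have := congrFun h i
  simp [hcFlip] at this

/-- red indicator minus blue indicator -/
def rlD {n : ℕ} (f : (Fin n → Bool) → Bool) (col : (Fin n → Bool) → Fin n → Bool)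
    (x : Fin n → Bool) (i : Fin n) : ℝ :=
  (if f x = true ∧ f (hcFlip x i) ≠ f x ∧ col x i = true then (1 : ℝ) else 0) -
  (if f x = false ∧ f (hcFlip x i) ≠ f x ∧ col x i = false then (1 : ℝ) else 0)

def rlS {n : ℕ} (x : Fin n → Bool) (i : Fin n) : ℝ := if x i then (-1 : ℝ) else 1

lemma rl_coef {n : ℕ} (f : (Fin n → Bool) → Bool) (col : (Fin n → Bool) → Fin n → Bool)
    (hcol : colSymm col) (i : Fin n) :
    ∑ x, toReal f x * rlS x i = ∑ x, rlD f col x i * rlS x i := by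
  rw [← sub_eq_zero, ← Finset.sum_sub_distrib]
  refine Finset.sum_involution (fun x _ => hcFlip x i) ?_ ?_ ?_ ?_
  · intro x _
    have hs : rlS (hcFlip x i) i = - rlS x i := by
      unfold rlS hcFlip
      cases h : x i <;> simp [h]
    have h : toReal f (hcFlip x i) - rlD f col (hcFlip x i) i
        = toReal f x - rlD f col x i := by
      unfold toReal rlD
      rw [rl_flip_flip, hcol x i]
      cases f x <;> cases f (hcFlip x i) <;> cases col x i <;> simp
    rw [hs]
    linear_combination (- rlS x i) * h
  · intro x _ _
    exact rl_flip_ne x i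
  · intro x _
    exact Finset.mem_univ _
  · intro x _
    exact rl_flip_flip x i

lemma rl_sqrt_add {a b : ℝ} (ha : 0 ≤ a) (hb : 0 ≤ b) : √(a + b) ≤ √a + √b := by
  rw [Real.sqrt_le_left (by positivity)]
  nlinarith [Real.sq_sqrt ha, Real.sq_sqrt hb, Real.sqrt_nonneg a, Real.sqrt_nonneg b,
    mul_nonneg (Real.sqrt_nonneg a) (Real.sqrt_nonneg b)]

lemma rl_norm {n : ℕ} (f : (Fin n → Bool) → Bool) (col : (Fin n → Bool) → Fin n → Bool)
    (x : Fin n → Bool) :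
    ‖(WithLp.toLp 2 (fun i => rlD f col x i * rlS x i) : EuclideanSpace ℝ (Fin n))‖
      ≤ redGradNorm f col x + blueGradNorm f col x := by
  rw [EuclideanSpace.norm_eq]
  unfold redGradNorm blueGradNorm
  refine le_trans (le_of_eq ?_) (rl_sqrt_add ?_ ?_)
  · rw [← Finset.sum_add_distrib]
    congr 1
    refine Finset.sum_congr rfl fun i _ => ?_
    simp only [Real.norm_eq_abs, sq_abs]
    unfold rlD rlS
    cases f x <;> cases f (hcFlip x i) <;> cases col x i <;> cases x i <;> simp
  all_goals positivity

lemma rl_weq {n : ℕ} (g : (Fin n → Bool) → ℝ) :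
    wEq n g 1 = ∑ i, ((∑ x, g x * rlS x i) / 2 ^ n) ^ 2 := by
  unfold wEq
  have : (Finset.univ.filter (fun S : Finset (Fin n) => S.card = 1))
      = Finset.univ.image (fun i : Fin n => ({i} : Finset (Fin n))) := by
    ext S
    simp [Finset.card_eq_one, eq_comm]
  rw [this, Finset.sum_image (by intro a _ b _ h; simpa using h)]
  simp [fcoef, hcExp, chi, rlS]

theorem robust_level_one_bound (n : ℕ) (f : (Fin n → Bool) → Bool)
    (col : (Fin n → Bool) → Fin n → Bool) (hcol : colSymm col) :
    hcExp n (fun x => redGradNorm f col x + blueGradNorm f col x) ≥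
      (1 / 2) * Real.sqrt (wEq n (toReal f) 1) := by
  set v : (Fin n → Bool) → EuclideanSpace ℝ (Fin n) :=
    fun x => WithLp.toLp 2 (fun i => rlD f col x i * rlS x i) with hv
  have h1 : Real.sqrt (wEq n (toReal f) 1) = ‖∑ x, v x‖ / 2 ^ n := by
    rw [rl_weq, EuclideanSpace.norm_eq]
    simp only [div_pow]
    rw [← Finset.sum_div, Real.sqrt_div' _ (by positivity), Real.sqrt_sq (by positivity)]
    congr 2
    refine Finset.sum_congr rfl fun i _ => ?_
    rw [rl_coef f col hcol i]
    simp [hv]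
  have h2 : Real.sqrt (wEq n (toReal f) 1) ≤
      hcExp n (fun x => redGradNorm f col x + blueGradNorm f col x) := by
    rw [h1]
    unfold hcExp
    gcongr
    exact (norm_sum_le _ _).trans (Finset.sum_le_sum fun x _ => rl_norm f col x)
  have h3 := Real.sqrt_nonneg (wEq n (toReal f) 1)
  linarith

end
end
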